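/- arXiv:0803.2034 — 3 statements merged into one kernel-verified Lean document; each statement's English description precedes it below -/
import Mathlib

section
/- For all natural numbers N and n, the cardinality Nat.card of the set of tuples t : Fin (2*n) → (Fin N → ℤ) such that for every i there exists j : Fin N with t i = Pi.single j 1 or t i = -(Pi.single j 1), and ∑ i, t i = 0, equals the sum, over all functions m : Fin N → ℕ with ∑ j, m j = n (for instance m ranging over Fintype.piFinset (fun _ => Finset.range (n+1)) filtered by ∑ j, m j = n), of the multinomial coefficient Nat.multinomial Finset.univ (Sum.elim m m), i.e. of (2n)! / ∏ j, ((m j)! * (m j)!). -/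
/-!
Record each vector `±e_j` of a tuple as a letter of the alphabet `ι ⊕ ι`. The tuple sums to zero
exactly when every `+e_j` occurs as often as `-e_j`, say `m j` times. The words with prescribed
letter counts `c` are counted by the coefficient of `∏ a, X a ^ c a` in `(∑ a, X a) ^ k`, where `k`
is the length, and this coefficient is multinomial.
-/

section LetterCount

open Finset

variable {κ α : Type*} [Fintype κ] [DecidableEq α]

/-- The number of occurrences of each letter in a finite word. A word with letters in `α` is a
function into `α` from an arbitrary finite type `κ` of positions. -/
def letterCount (f : κ → α) (a : α) : ℕ :=
  #{i | f i = a}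

theorem sum_letterCount [Fintype α] (f : κ → α) : ∑ a, letterCount f a = Fintype.card κ :=
  (card_eq_sum_card_fiberwise fun i _ => mem_coe.2 (mem_univ (f i))).symm

theorem prod_X_eq_monomial_letterCount {R : Type*} [CommSemiring R] [Finite α] (f : κ → α) :
    ∏ i, (MvPolynomial.X (f i) : MvPolynomial α R) =
      MvPolynomial.monomial (Finsupp.equivFunOnFinite.symm (letterCount f)) 1 := by
  have hcount : ∑ i, Finsupp.single (f i) 1 = Finsupp.equivFunOnFinite.symm (letterCount f) := by
    ext a
    simp [letterCount, Finsupp.finsetSum_apply, Finsupp.single_apply]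
  simp only [← hcount, MvPolynomial.monomial_sum_one, MvPolynomial.X]

theorem card_filter_letterCount_eq_multinomial [DecidableEq κ] [Fintype α] {c : α → ℕ}
    (hc : ∑ a, c a = Fintype.card κ) :
    #{f : κ → α | letterCount f = c} = Nat.multinomial univ c := by
  set d : α →₀ ℕ := Finsupp.equivFunOnFinite.symm c
  have hd : (d.sum fun _ m => m) = Fintype.card κ :=
    (Finsupp.sum_fintype _ _ fun _ => rfl).trans hc
  calc #{f : κ → α | letterCount f = c}
    _ = (∑ f : κ → α, ∏ i, MvPolynomial.X (f i) : MvPolynomial α ℕ).coeff d := by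
      simp [prod_X_eq_monomial_letterCount, MvPolynomial.coeff_sum, MvPolynomial.coeff_monomial, d]
    _ = ((∑ a, MvPolynomial.X a) ^ Fintype.card κ : MvPolynomial α ℕ).coeff d := by
      rw [← Fintype.piFinset_univ, ← prod_univ_sum, prod_const, card_univ]
    _ = d.multinomial := by
      rw [MvPolynomial.coeff_sum_X_pow_of_fintype, if_pos hd, Nat.cast_id]
    _ = Nat.multinomial univ c := (Finsupp.multinomial_of_support_subset (subset_univ _)).symm

end LetterCount

section BalancedWords

open Finset

variable {ι κ : Type*} [Fintype κ] [DecidableEq ι]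

/-- A word in the letters `inl j` and `inr j` is balanced if `inl j` and `inr j` occur equally
often, for each `j`. Here `inl j` encodes `+e_j` and `inr j` encodes `-e_j`. -/
def IsBalanced (f : κ → ι ⊕ ι) : Prop :=
  letterCount f ∘ Sum.inl = letterCount f ∘ Sum.inr

theorem letterCount_eq_sumElim_self_iff {f : κ → ι ⊕ ι} {m : ι → ℕ} :
    letterCount f = Sum.elim m m ↔ IsBalanced f ∧ letterCount f ∘ Sum.inl = m := by
  rw [← Sum.elim_comp_inl_inr (letterCount f), Sum.elim_eq_iff, IsBalanced]
  constructor
  · rintro ⟨hinl, hinr⟩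
    exact ⟨hinl.trans hinr.symm, hinl⟩
  · rintro ⟨hbal, hinl⟩
    exact ⟨hinl, hbal.symm.trans hinl⟩

theorem IsBalanced.sum_letterCount_inl [Fintype ι] {f : κ → ι ⊕ ι} (hf : IsBalanced f) {n : ℕ}
    (hκ : Fintype.card κ = 2 * n) : ∑ j, letterCount f (.inl j) = n := by
  have htotal := sum_letterCount f
  have heq : ∑ j, letterCount f (.inl j) = ∑ j, letterCount f (.inr j) :=
    sum_congr rfl fun j _ => congrFun hf j
  rw [Fintype.sum_sum_type] at htotal
  omega

theorem card_isBalanced [Fintype ι] {n : ℕ} (hκ : Fintype.card κ = 2 * n) :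
    Nat.card {f : κ → ι ⊕ ι // IsBalanced f} =
      ∑ m ∈ piAntidiag univ n, Nat.multinomial univ (Sum.elim m m : ι ⊕ ι → ℕ) := by
  classical
  have hmaps (f : κ → ι ⊕ ι) (hf : f ∈ filter IsBalanced univ) :
      letterCount f ∘ Sum.inl ∈ piAntidiag univ n := by
    simpa using ((mem_filter_univ f).1 hf).sum_letterCount_inl hκ
  rw [Nat.card_eq_fintype_card, Fintype.card_subtype, card_eq_sum_card_fiberwise hmaps]
  refine sum_congr rfl fun m hm => ?_
  have hm' : ∑ x, (Sum.elim m m : ι ⊕ ι → ℕ) x = Fintype.card κ := by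
    simp [(mem_piAntidiag.1 hm).1, hκ, two_mul]
  simp only [filter_filter, ← letterCount_eq_sumElim_self_iff,
    card_filter_letterCount_eq_multinomial hm']

end BalancedWords

section SignedBasis

variable {ι κ : Type*} [DecidableEq ι] (R : Type*) [AddCommGroupWithOne R]

/-- The signed standard basis vectors of `ι → R`: `inl j` is sent to `e_j` and `inr j`
to `-e_j`. -/
def signedBasis : ι ⊕ ι → ι → R :=
  Sum.elim (fun j => Pi.single j 1) fun j => -Pi.single j 1

theorem signedBasis_apply (x : ι ⊕ ι) (j : ι) :
    signedBasis R x j = (if x = .inl j then 1 else 0) - (if x = .inr j then 1 else 0) := by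
  rcases x with a | a <;> simp [signedBasis, Pi.single_apply, eq_comm]

theorem signedBasis_swap (x : ι ⊕ ι) : signedBasis R x.swap = -signedBasis R x := by
  rcases x with a | a <;> simp [signedBasis]

theorem signedBasis_apply_eq_one_iff [NeZero (2 : R)] {x : ι ⊕ ι} {j : ι} :
    signedBasis R x j = 1 ↔ x = .inl j := by
  have htwo : (1 : R) + 1 ≠ 0 := one_add_one_eq_two (R := R) ▸ two_ne_zero
  have hone : (0 : R) ≠ 1 := fun h => htwo (by rw [← h, add_zero])
  have hneg : (-1 : R) ≠ 1 := fun h => htwo (neg_eq_iff_add_eq_zero.1 h)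
  rcases x with a | a <;> by_cases haj : a = j <;>
    simp [signedBasis, eq_comm (a := j), *]

theorem signedBasis_injective [NeZero (2 : R)] :
    Function.Injective (signedBasis R : ι ⊕ ι → ι → R) := by
  have eq_of_inl {a : ι} {y : ι ⊕ ι} (h : signedBasis R (.inl a) = signedBasis R y) :
      .inl a = y :=
    ((signedBasis_apply_eq_one_iff R).1 <|
      (congrFun h a).symm.trans <| (signedBasis_apply_eq_one_iff R).2 rfl).symm
  rintro (a | a) y h
  · exact eq_of_inl h
  · have hswap : signedBasis R (.inl a) = signedBasis R y.swap := by
      rw [signedBasis_swap, ← h, ← signedBasis_swap, Sum.swap_inr]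
    rw [← Sum.swap_inl, eq_of_inl hswap, Sum.swap_swap]

theorem mem_range_signedBasis {v : ι → R} :
    v ∈ Set.range (signedBasis R) ↔ ∃ j, v = Pi.single j 1 ∨ v = -Pi.single j 1 := by
  simp [signedBasis, exists_or, eq_comm]

theorem sum_signedBasis_apply [Fintype κ] (f : κ → ι ⊕ ι) (j : ι) :
    (∑ i, signedBasis R (f i)) j = letterCount f (.inl j) - letterCount f (.inr j) := by
  simp [Finset.sum_apply, signedBasis_apply, letterCount]

theorem sum_signedBasis_eq_zero_iff [CharZero R] [Fintype κ] {f : κ → ι ⊕ ι} :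
    ∑ i, signedBasis R (f i) = 0 ↔ IsBalanced f := by
  simp only [IsBalanced, funext_iff, sum_signedBasis_apply, Pi.zero_apply, sub_eq_zero,
    Nat.cast_inj, Function.comp_apply]

theorem setOf_balanced_tuples_eq_image [CharZero R] [Fintype κ] :
    {t : κ → ι → R |
        (∀ i, ∃ j, t i = Pi.single j 1 ∨ t i = -(Pi.single j 1)) ∧ ∑ i, t i = 0} =
      (signedBasis R ∘ ·) '' {f | IsBalanced f} := by
  ext t
  simp only [← mem_range_signedBasis]
  constructor
  · rintro ⟨ht, hsum⟩
    choose f hf using ht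
    obtain rfl : signedBasis R ∘ f = t := funext hf
    exact ⟨f, (sum_signedBasis_eq_zero_iff R).1 hsum, rfl⟩
  · rintro ⟨f, hf, rfl⟩
    exact ⟨fun i => Set.mem_range_self (f i), (sum_signedBasis_eq_zero_iff R).2 hf⟩

end SignedBasis

open Finset in
theorem filter_piFinset_range_sum_eq_piAntidiag {ι : Type*} [Fintype ι] [DecidableEq ι]
    (n : ℕ) :
    (Fintype.piFinset fun _ : ι => range (n + 1)).filter (fun m => ∑ j, m j = n) =
      piAntidiag univ n := by
  ext m
  simp only [mem_filter, Fintype.mem_piFinset, mem_range, mem_piAntidiag, mem_univ, implies_true,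
    and_true, and_iff_right_iff_imp]
  rintro rfl j
  exact Nat.lt_succ_of_le (single_le_sum_of_canonicallyOrdered (mem_univ j))

theorem card_balanced_tuples_eq_sum_multinomial_general {ι κ R : Type*} [Fintype ι]
    [DecidableEq ι] [Fintype κ] [AddCommGroupWithOne R] [CharZero R] {n : ℕ}
    (hκ : Fintype.card κ = 2 * n) :
    Nat.card {t : κ → ι → R //
        (∀ i, ∃ j, t i = Pi.single j 1 ∨ t i = -(Pi.single j 1)) ∧ ∑ i, t i = 0} =
      ∑ m ∈ Finset.piAntidiag Finset.univ n,
        Nat.multinomial Finset.univ (Sum.elim m m : ι ⊕ ι → ℕ) := by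
  rw [← card_isBalanced hκ, ← Set.coe_ofPred, setOf_balanced_tuples_eq_image,
    Nat.card_image_of_injective (signedBasis_injective R).comp_left, Set.coe_ofPred]

theorem card_balanced_tuples_eq_sum_multinomial (N n : ℕ) :
    Nat.card {t : Fin (2 * n) → (Fin N → ℤ) //
        (∀ i, ∃ j : Fin N, t i = Pi.single j 1 ∨ t i = -(Pi.single j 1)) ∧
        ∑ i, t i = 0} =
      ∑ m ∈ (Fintype.piFinset fun _ : Fin N => Finset.range (n + 1)).filter
          (fun m => ∑ j, m j = n),
        Nat.multinomial Finset.univ (Sum.elim m m : Fin N ⊕ Fin N → ℕ) := by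
  rw [filter_piFinset_range_sum_eq_piAntidiag]
  exact card_balanced_tuples_eq_sum_multinomial_general (Fintype.card_fin _)
end

section
/- Let V and W be quivers and let φ : V ⥤q W be a prefunctor such that the object map φ.obj is injective and for all a b : V the arrow map φ.map : (a ⟶ b) → (φ.obj a ⟶ φ.obj b) is injective. Then the induced functor CategoryTheory.Groupoid.Free.freeGroupoidFunctor φ : FreeGroupoid V ⥤ FreeGroupoid W between free groupoids is faithful. -/
open CategoryTheory

universe u v u' v'

/-!
Label each arrow of `W` by itself: a path in the symmetrification of `V` is then sent by `φ` to a
word in the free group on the arrows of `W`. Because `φ` does not identify arrows that share a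
source or a target, a path is determined by its source and its word, and every cancellation in the
word comes from a backtrack in the path. If two paths give the same element of the free group, their
words have a common reduction by the Church–Rosser theorem for free groups; it is spelled by a path
which represents the same morphism of the free groupoid as both of them.
-/

open Function Quiver

/-- An immersion of quivers in the sense of Stallings: a prefunctor which identifies neither two
arrows with the same source nor two arrows with the same target. -/
structure IsQuiverImmersion {V : Type*} [Quiver V] {W : Type*} [Quiver W] (φ : V ⥤q W) : Prop where
  star_injective : ∀ a, Injective (φ.star a)
  costar_injective : ∀ a, Injective (φ.costar a)

section Immersion

variable {U V W : Type*} [Quiver U] [Quiver V] [Quiver W]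

theorem IsQuiverImmersion.comp {φ : U ⥤q V} {ψ : V ⥤q W} (hφ : IsQuiverImmersion φ)
    (hψ : IsQuiverImmersion ψ) : IsQuiverImmersion (φ ⋙q ψ) where
  star_injective a := (hψ.star_injective _).comp (hφ.star_injective a)
  costar_injective a := (hψ.costar_injective _).comp (hφ.costar_injective a)

theorem IsQuiverImmersion.symmetrify_star_injective {φ : V ⥤q W} (hφ : IsQuiverImmersion φ)
    (x : Symmetrify V) : Injective (φ.symmetrify.star x) := by
  rw [φ.symmetrifyStar x]
  exact (Equiv.injective _).comp
    (((hφ.star_injective x).sumMap (hφ.costar_injective x)).comp (Equiv.injective _))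

theorem isQuiverImmersion_of_injective {φ : V ⥤q W} (hobj : Injective φ.obj)
    (hmap : ∀ a b : V, Injective (φ.map : (a ⟶ b) → (φ.obj a ⟶ φ.obj b))) :
    IsQuiverImmersion φ where
  star_injective a := hobj.sigma_map (hmap a)
  costar_injective b := hobj.sigma_map (β₂ := fun c => c ⟶ φ.obj b) fun a => hmap a b

variable (W) in
/-- The tautological labelling of the arrows of a quiver, each arrow being its own label. -/
def totalLabelling : W ⥤q Quiver.SingleObj (Quiver.Total W) where
  obj _ := Quiver.SingleObj.star _
  map {a b} e := ⟨a, b, e⟩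

theorem isQuiverImmersion_totalLabelling : IsQuiverImmersion (totalLabelling W) where
  star_injective _ := by rintro ⟨_, _⟩ ⟨_, _⟩ ⟨⟩; rfl
  costar_injective _ := by rintro ⟨_, _⟩ ⟨_, _⟩ ⟨⟩; rfl

end Immersion

section PathClass

variable {V : Type*} [Quiver V] {x y z : Symmetrify V}

/-- A vertex of the symmetrified quiver, as an object of the free groupoid. -/
def vertexClass (x : Symmetrify V) : Quiver.FreeGroupoid V :=
  (Quotient.functor FreeGroupoid.redStep).obj x

theorem vertexClass_surjective : Surjective (vertexClass : Symmetrify V → Quiver.FreeGroupoid V) :=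
  fun X => ⟨X.as, rfl⟩

/-- The morphism of the free groupoid represented by a path of arrows and formal inverses. -/
def pathClass (p : Path x y) : vertexClass x ⟶ vertexClass y :=
  (Quotient.functor FreeGroupoid.redStep).map p

theorem pathClass_surjective :
    Surjective (pathClass : Path x y → (vertexClass x ⟶ vertexClass y)) :=
  (Quotient.functor FreeGroupoid.redStep).map_surjective

theorem pathClass_cons (p : Path x y) (e : y ⟶ z) :
    pathClass (p.cons e) = pathClass p ≫ pathClass e.toPath :=
  rfl

theorem pathClass_cons_cons_reverse (p : Path x y) (e : y ⟶ z) :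
    pathClass ((p.cons e).cons (reverse e)) = pathClass p := by
  have backtrack : 𝟙 _ = pathClass e.toPath ≫ pathClass (reverse e).toPath :=
    CategoryTheory.Quotient.sound _ (.step y z e)
  rw [pathClass_cons, pathClass_cons, Category.assoc, ← backtrack, Category.comp_id]

end PathClass

section Word

variable {V : Type*} [Quiver V] {α : Type*} (l : V ⥤q Quiver.SingleObj α)

/-- The labelling of arrows and formal inverses by signed labels, `true` marking an arrow and
`false` an inverse as in `FreeGroup`. -/
def signedLabelling : Symmetrify V ⥤q Quiver.SingleObj (α × Bool) :=
  l.symmetrify ⋙q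
    { obj _ := Quiver.SingleObj.star _
      map := Sum.elim (·, true) (·, false) }

theorem signedLabelling_map_reverse {x y : Symmetrify V} {e : x ⟶ y} {a : α} {b : Bool}
    (h : (signedLabelling l).map e = (a, b)) : (signedLabelling l).map (reverse e) = (a, !b) := by
  rcases e with e | e <;> cases h <;> rfl

/-- The word spelled by a path of arrows and formal inverses. The last arrow of the path is the
first letter, as composition in `SingleObj` is reversed multiplication. -/
def word {x y : Symmetrify V} (p : Path x y) : List (α × Bool) :=
  Quiver.SingleObj.pathToList ((signedLabelling l).mapPath p)

theorem word_cons {x y z : Symmetrify V} (p : Path x y) (e : y ⟶ z) :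
    word l (p.cons e) = (signedLabelling l).map e :: word l p :=
  rfl

/-- The functor to the free group on the labels which sends each arrow to its label. -/
def labelFunctor : Quiver.FreeGroupoid V ⥤ CategoryTheory.SingleObj (FreeGroup α) :=
  FreeGroupoid.lift (l ⋙q Quiver.SingleObj.toPrefunctor FreeGroup.of)

theorem labelFunctor_map_pathClass {x y : Symmetrify V} (p : Path x y) :
    (labelFunctor l).map (pathClass p) = FreeGroup.mk (word l p) := by
  induction p with
  | nil => rfl
  | cons p e ih =>
    have label : (labelFunctor l).map (pathClass e.toPath) =
        FreeGroup.mk [(signedLabelling l).map e] := by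
      rcases e with e | e <;> rfl
    rw [pathClass_cons, Functor.map_comp, ih, label]
    rfl

variable {l}

theorem IsQuiverImmersion.signedLabelling_star_injective (hl : IsQuiverImmersion l)
    (x : Symmetrify V) : Injective ((signedLabelling l).star x) := by
  rw [signedLabelling, Prefunctor.star_comp]
  refine Injective.comp ?_ (hl.symmetrify_star_injective x)
  rintro ⟨⟨⟩, a | a⟩ ⟨⟨⟩, b | b⟩ h <;> cases h <;> rfl

theorem IsQuiverImmersion.word_injective (hl : IsQuiverImmersion l) {x y : Symmetrify V} :
    Injective (word l : Path x y → List (α × Bool)) := by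
  intro p q h
  have hpq : (signedLabelling l).pathStar x ⟨y, p⟩ = (signedLabelling l).pathStar x ⟨y, q⟩ :=
    Sigma.ext rfl (heq_of_eq (Quiver.SingleObj.pathEquivList.injective h))
  cases Prefunctor.pathStar_injective _ hl.signedLabelling_star_injective x hpq
  rfl

theorem IsQuiverImmersion.exists_word_eq_of_red_step (hl : IsQuiverImmersion l)
    {x y : Symmetrify V} (p : Path x y) {L : List (α × Bool)}
    (h : FreeGroup.Red.Step (word l p) L) :
    ∃ q : Path x y, word l q = L ∧ pathClass q = pathClass p := by
  induction p generalizing L with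
  | nil => exact (FreeGroup.Red.not_step_nil h).elim
  | cons p e ih =>
    rcases he : (signedLabelling l).map e with ⟨a, b⟩
    rw [word_cons, he] at h
    rcases FreeGroup.Red.Step.cons_left_iff.1 h with ⟨L, hL, rfl⟩ | hp
    · obtain ⟨q, rfl, hq⟩ := ih hL
      exact ⟨q.cons e, by rw [word_cons, he], by rw [pathClass_cons, hq, pathClass_cons]⟩
    · cases p with
      | nil => cases hp
      | cons p f =>
        obtain ⟨hf, rfl⟩ := List.cons.inj hp
        have hfe : (signedLabelling l).map (reverse f) = (signedLabelling l).map e := by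
          rw [signedLabelling_map_reverse l hf, Bool.not_not, he]
        have backtrack : Quiver.Star.mk (reverse f) = Quiver.Star.mk e := by
          apply hl.signedLabelling_star_injective
          exact Sigma.ext rfl (heq_of_eq hfe)
        cases backtrack
        exact ⟨p, rfl, (pathClass_cons_cons_reverse p f).symm⟩

theorem IsQuiverImmersion.exists_word_eq_of_red (hl : IsQuiverImmersion l)
    {x y : Symmetrify V} (p : Path x y) {L : List (α × Bool)}
    (h : FreeGroup.Red (word l p) L) :
    ∃ q : Path x y, word l q = L ∧ pathClass q = pathClass p := by
  induction h with
  | refl => exact ⟨p, rfl, rfl⟩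
  | tail _ step ih =>
    obtain ⟨q, rfl, hq⟩ := ih
    obtain ⟨r, hr, hrq⟩ := hl.exists_word_eq_of_red_step q step
    exact ⟨r, hr, hrq.trans hq⟩

theorem IsQuiverImmersion.faithful_labelFunctor (hl : IsQuiverImmersion l) :
    (labelFunctor l).Faithful where
  map_injective {X Y} f g h := by
    obtain ⟨x, rfl⟩ := vertexClass_surjective X
    obtain ⟨y, rfl⟩ := vertexClass_surjective Y
    obtain ⟨p, rfl⟩ := pathClass_surjective f
    obtain ⟨q, rfl⟩ := pathClass_surjective g
    rw [labelFunctor_map_pathClass, labelFunctor_map_pathClass] at h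
    obtain ⟨L, hpL, hqL⟩ := FreeGroup.Red.exact.1 h
    obtain ⟨p', hp', hpp'⟩ := hl.exists_word_eq_of_red p hpL
    obtain ⟨q', hq', hqq'⟩ := hl.exists_word_eq_of_red q hqL
    rw [← hpp', ← hqq', hl.word_injective (hp'.trans hq'.symm)]

end Word

theorem freeGroupoidFunctor_comp_labelFunctor {V : Type*} [Quiver V] {W : Type*} [Quiver W]
    {α : Type*} (φ : V ⥤q W) (l : W ⥤q Quiver.SingleObj α) :
    freeGroupoidFunctor φ ⋙ labelFunctor l = labelFunctor (φ ⋙q l) := by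
  apply Quiver.FreeGroupoid.lift_unique
  rfl

theorem freeGroupoidFunctor_faithful_of_injective_general
    {V : Type u} [Quiver.{v} V] {W : Type u'} [Quiver.{v'} W]
    {φ : V ⥤q W} (hφ : IsQuiverImmersion φ) : (freeGroupoidFunctor φ).Faithful :=
  have := (hφ.comp isQuiverImmersion_totalLabelling).faithful_labelFunctor
  (freeGroupoidFunctor_comp_labelFunctor φ (totalLabelling W)).faithful_of_comp

theorem freeGroupoidFunctor_faithful_of_injective
    {V : Type u} [Quiver.{v} V] {W : Type u'} [Quiver.{v'} W]
    (φ : V ⥤q W) (hobj : Function.Injective φ.obj)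
    (hmap : ∀ a b : V, Function.Injective (φ.map : (a ⟶ b) → (φ.obj a ⟶ φ.obj b))) :
    (Quiver.freeGroupoidFunctor φ).Faithful :=
  freeGroupoidFunctor_faithful_of_injective_general (isQuiverImmersion_of_injective hobj hmap)
end

section
/- Let N be a natural number and let V be a quiver having a unique vertex v (an instance Unique V) such that the type of loops (v ⟶ v) is equivalent to Fin N. Then the vertex group of the free groupoid of V at the object corresponding to v — the type of endomorphisms of that object in CategoryTheory.FreeGroupoid V, with the group structure a groupoid induces on each endomorphism type — is isomorphic as a group to the free group FreeGroup (Fin N): Nonempty of a MulEquiv between them. -/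
/-!
On a quiver with a single vertex `v`, a functor from the free groupoid to the one-object groupoid of
a group `G` is the same as a map from the loops at `v` to `G`. For `G = FreeGroup (v ⟶ v)`, the
tautological labelling of the loops yields a functor whose inverse sends each free generator to the
class of the corresponding loop: both round trips fix the generators, so they are identities by the
uniqueness parts of the two universal properties.
-/

open CategoryTheory

universe u v

section FreeGroupoid

open Quiver.FreeGroupoid (of lift lift_unique)

variable {V : Type*} [Quiver V] {C : Type*} [Groupoid C]

theorem freeGroupoid_functor_ext {F G : Quiver.FreeGroupoid V ⥤ C}
    (h : of V ⋙q F.toPrefunctor = of V ⋙q G.toPrefunctor) : F = G :=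
  (lift_unique _ F h).trans (lift_unique _ G rfl).symm

theorem freeGroupoid_lift_map_of_map (φ : V ⥤q C) {X Y : V} (f : X ⟶ Y) :
    (lift φ).map ((of V).map f) = φ.map f :=
  Category.id_comp (φ.map f)

end FreeGroupoid

/-- Multiplication in the vertex group is `x * y = x ≫ y`, whereas in `End c` it is
`x * y = y ≫ x`; inversion is therefore an isomorphism between the two. -/
def vertexGroupMulEquivEnd {C : Type*} [Groupoid C] (c : C) : (c ⟶ c) ≃* End c where
  toFun γ := γ⁻¹
  invFun γ := (show c ⟶ c from γ)⁻¹
  left_inv := inv_inv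
  right_inv := inv_inv (G := c ⟶ c)
  map_mul' := mul_inv_rev (G := c ⟶ c)

section Loops

open Quiver.FreeGroupoid (of lift)

variable {V : Type*} [Quiver V]

/-- The homomorphism from the free group on the loops at `v` to the endomorphisms of `v` in the free
groupoid, sending each generator to the class of the loop. -/
def freeGroupToEnd (v : V) : FreeGroup (v ⟶ v) →* End ((of V).obj v) :=
  FreeGroup.lift fun f => (of V).map f

variable [Subsingleton V]

/-- The labelling of the edges of a quiver whose only vertex is `v` by the generators of the free
group on its loops. Every edge is a loop at `v` only up to an equality of vertices, hence the
cast. -/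
def loopLabelling (v : V) : V ⥤q SingleObj (FreeGroup (v ⟶ v)) where
  obj _ := SingleObj.star _
  map {X Y} f := FreeGroup.of (Quiver.Hom.cast (Subsingleton.elim X v) (Subsingleton.elim Y v) f)

/-- The homomorphism induced on endomorphisms by the functor that extends `loopLabelling v` to the
free groupoid. -/
def endToFreeGroup (v : V) : End ((of V).obj v) →* FreeGroup (v ⟶ v) :=
  (SingleObj.toEnd _).symm.toMonoidHom.comp ((lift (loopLabelling v)).mapEnd _)

theorem endToFreeGroup_of_map {v : V} (f : v ⟶ v) :
    endToFreeGroup v ((of V).map f) = FreeGroup.of f :=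
  freeGroupoid_lift_map_of_map (loopLabelling v) f

theorem endToFreeGroup_comp_freeGroupToEnd (v : V) :
    (endToFreeGroup v).comp (freeGroupToEnd v) = MonoidHom.id _ := by
  ext f
  simp [freeGroupToEnd, endToFreeGroup_of_map]

theorem freeGroupToEnd_endToFreeGroup_of_map {v : V} (f : v ⟶ v) :
    freeGroupToEnd v (endToFreeGroup v ((of V).map f)) = (of V).map f := by
  rw [endToFreeGroup_of_map]
  exact FreeGroup.lift_apply_of

theorem lift_loopLabelling_comp_functor_freeGroupToEnd (v : V) :
    lift (loopLabelling v) ⋙ SingleObj.functor (freeGroupToEnd v) = 𝟭 _ := by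
  apply freeGroupoid_functor_ext
  refine Prefunctor.ext (fun X => congrArg _ (Subsingleton.elim v X)) fun X Y f => ?_
  obtain rfl := Subsingleton.elim v X
  obtain rfl := Subsingleton.elim v Y
  exact freeGroupToEnd_endToFreeGroup_of_map f

theorem freeGroupToEnd_comp_endToFreeGroup (v : V) :
    (freeGroupToEnd v).comp (endToFreeGroup v) = MonoidHom.id _ := by
  ext p
  calc freeGroupToEnd v (endToFreeGroup v p)
    _ = 𝟙 _ ≫ p ≫ 𝟙 _ :=
      Functor.congr_hom (lift_loopLabelling_comp_functor_freeGroupToEnd v) p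
    _ = p := by rw [Category.id_comp, Category.comp_id]

/-- The endomorphisms of the only vertex `v` in the free groupoid form the free group on the loops
at `v`. -/
def endMulEquivFreeGroup (v : V) : End ((of V).obj v) ≃* FreeGroup (v ⟶ v) :=
  (endToFreeGroup v).toMulEquiv (freeGroupToEnd v)
    (freeGroupToEnd_comp_endToFreeGroup v) (endToFreeGroup_comp_freeGroupToEnd v)

end Loops

theorem vertexGroup_freeGroupoid_one_vertex_N_loops_general
    {V : Type*} [Quiver V] [Subsingleton V] (v : V) {ι : Type*} (e : (v ⟶ v) ≃ ι) :
    Nonempty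
      (((Quiver.FreeGroupoid.of V).obj v ⟶ (Quiver.FreeGroupoid.of V).obj v) ≃* FreeGroup ι) :=
  ⟨(vertexGroupMulEquivEnd _).trans <|
    (endMulEquivFreeGroup v).trans <| FreeGroup.freeGroupCongr e⟩

/-- The graph groupoid of the one-vertex-`N`-loop-edge graph is group-isomorphic to the
free group on `N` generators: the vertex group of the free groupoid at the unique vertex
is isomorphic to `FreeGroup (Fin N)`. -/
theorem vertexGroup_freeGroupoid_one_vertex_N_loops
    (N : ℕ) {V : Type u} [Quiver.{v} V] [Unique V]
    (e : ((default : V) ⟶ (default : V)) ≃ Fin N) :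
    Nonempty
      ((((Quiver.FreeGroupoid.of V).obj default ⟶ (Quiver.FreeGroupoid.of V).obj default) ≃*
        FreeGroup (Fin N))) := by
  exact vertexGroup_freeGroupoid_one_vertex_N_loops_general default e
end
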